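/- Let σ and σ' be polyhedral cones in a finite-dimensional real vector space V (each the set of nonnegative linear combinations of a finite set of vectors). Then σ ∩ σ' is a polyhedral cone, and every face of σ ∩ σ' is of the form τ ∩ τ' for some face τ of σ and some face τ' of σ'. -/

import Mathlib

/-- A subset of a real vector space is a polyhedral cone if it is the set of
nonnegative linear combinations of a finite set of vectors. -/
def IsPolyhedralCone {V : Type*} [AddCommGroup V] [Module ℝ V] (σ : Set V) : Prop :=
  ∃ s : Finset V, σ = {x | ∃ c : V → ℝ, (∀ v ∈ s, 0 ≤ c v) ∧ x = ∑ v ∈ s, c v • v}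

/-- `τ` is a face of `σ` if it is cut out of `σ` by a linear functional which is
nonnegative on `σ`. -/
def IsFaceOf {V : Type*} [AddCommGroup V] [Module ℝ V] (τ σ : Set V) : Prop :=
  ∃ ℓ : V →ₗ[ℝ] ℝ, (∀ x ∈ σ, 0 ≤ ℓ x) ∧ τ = {x ∈ σ | ℓ x = 0}

/-!
*Finite generation.* Let `f` be nonnegative on the generators of `P`, negative on those of `N`.
If `x = y + z` with `y ∈ P`, `z ∈ N` and `f x ≥ 0`, then `x` is a nonnegative combination of `y` and
of `f y • z - f z • y ∈ ker f`. Hence cutting with a half-space preserves finite generation, and so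
does cutting with a subspace, as only finitely many linear functionals matter on a finitely
generated cone. Finally `C ∩ D` is the projection of `(C × D) ∩ {(x, y) | x = y}`.

*Faces.* If `ℓ ≥ 0` on `C ∩ D`, then `(0, -1)` is not in the finitely generated cone
`{(y - x, ℓ x) | x ∈ C, y ∈ D}`. A functional separating it by Farkas' lemma has, after scaling, the
form `(v, a) ↦ g v + a`, so `ℓ = (ℓ - g) + g` with `ℓ - g ≥ 0` on `C` and `g ≥ 0` on `D`. On `C ∩ D`
a sum of nonnegative terms vanishes exactly when both do.
-/

open PointedCone (hull dual positive)

section OrderedField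

variable {K V W : Type*} [Field K] [LinearOrder K] [IsStrictOrderedRing K]
  [AddCommGroup V] [Module K V] [AddCommGroup W] [Module K W]

/-- The bilinear map `(y, z) ↦ f y • z - f z • y`. It takes values in `ker f`, and for
`f z ≤ 0 ≤ f y` its value is the nonnegative combination of `y` and `z` used in Fourier–Motzkin
elimination. It is linear over the nonnegative scalars so that `Submodule.map₂` applies to cones. -/
def eliminant (f : Module.Dual K V) : V →ₗ[{c : K // 0 ≤ c}] V →ₗ[{c : K // 0 ≤ c}] V :=
  (LinearMap.lsmul K V ∘ₗ f - (LinearMap.lsmul K V ∘ₗ f).flip).restrictScalars₁₂ _ _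

theorem eliminant_apply (f : Module.Dual K V) (y z : V) :
    eliminant f y z = f y • z - f z • y := rfl

theorem apply_eliminant (f : Module.Dual K V) (y z : V) : f (eliminant f y z) = 0 := by
  simp [eliminant_apply, mul_comm]

theorem sup_inf_halfSpace_eq_sup_map₂_eliminant {P N : PointedCone K V} {f : Module.Dual K V}
    (hP : ∀ y ∈ P, 0 ≤ f y) (hN : ∀ z ∈ N, z ≠ 0 → f z < 0) :
    (P ⊔ N) ⊓ (positive K K).comap f = P ⊔ Submodule.map₂ (eliminant f) P N := by
  have hN' : ∀ z ∈ N, f z ≤ 0 := fun z hz ↦ by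
    obtain rfl | hz0 := eq_or_ne z 0
    exacts [(map_zero f).le, (hN z hz hz0).le]
  apply le_antisymm
  · rintro x ⟨hx, hfx : 0 ≤ f x⟩
    obtain ⟨y, hy, z, hz, rfl⟩ := Submodule.mem_sup.1 hx
    obtain rfl | hz0 := eq_or_ne z 0
    · exact Submodule.mem_sup_left (by simpa using hy)
    have hfz : f z < 0 := hN z hz hz0
    rw [map_add] at hfx
    have hfy : 0 < f y := by linarith
    have hyz : y + z = ((f y + f z) / f y) • y + (f y)⁻¹ • eliminant f y z := by
      rw [eliminant_apply]
      match_scalars <;> field_simp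
      ring
    rw [hyz]
    exact add_mem
      (Submodule.mem_sup_left (P.smul_mem (div_nonneg hfx hfy.le) hy))
      (Submodule.mem_sup_right (PointedCone.smul_mem _ (inv_nonneg.2 hfy.le)
        (Submodule.apply_mem_map₂ _ hy hz)))
  · refine sup_le (le_inf le_sup_left hP) (Submodule.map₂_le.2 fun y hy z hz ↦ ⟨?_, ?_⟩)
    · rw [eliminant_apply, sub_eq_add_neg, ← neg_smul, add_comm]
      exact Submodule.add_mem_sup (P.smul_mem (neg_nonneg.2 (hN' z hz)) hy)
        (N.smul_mem (hP y hy) hz)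
    · exact (apply_eliminant f y z).ge

theorem apply_neg_of_mem_hull {s : Set V} {f : Module.Dual K V} (hs : ∀ v ∈ s, f v < 0)
    {z : V} (hz : z ∈ hull K s) (hz0 : z ≠ 0) : f z < 0 := by
  suffices z = 0 ∨ f z < 0 from this.resolve_left hz0
  clear hz0
  induction hz using Submodule.span_induction with
  | mem v hv => exact .inr (hs v hv)
  | zero => exact .inl rfl
  | add y z _ _ hy hz =>
    obtain rfl | hy := hy
    · simpa using hz
    obtain rfl | hz := hz
    · simpa using Or.inr hy
    · exact .inr (by simpa using add_neg hy hz)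
  | smul c z _ hz =>
    obtain rfl | hz := hz
    · simp
    obtain rfl | hc := eq_or_ne c 0
    · simp
    · right
      rw [← Nonneg.coe_smul, map_smul]
      exact mul_neg_of_pos_of_neg (show 0 < c from pos_of_ne_zero hc) hz

theorem pointedCone_fg_inf_halfSpace {C : PointedCone K V} (hC : C.FG) (f : Module.Dual K V) :
    (C ⊓ (positive K K).comap f).FG := by
  obtain ⟨s, rfl⟩ := hC
  set P := hull K {v ∈ (s : Set V) | 0 ≤ f v}
  set N := hull K {v ∈ (s : Set V) | f v < 0}
  have hPN : hull K s = P ⊔ N := by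
    rw [← Submodule.span_union]
    congr
    ext v
    simp [← and_or_left, le_or_gt]
  have hP : P.FG := Submodule.fg_span (s.finite_toSet.sep _)
  have hN : N.FG := Submodule.fg_span (s.finite_toSet.sep _)
  have hfP : P ≤ (positive K K).comap f := Submodule.span_le.2 fun v hv ↦ hv.2
  have hfN : ∀ z ∈ N, z ≠ 0 → f z < 0 := fun z ↦ apply_neg_of_mem_hull fun v hv ↦ hv.2
  rw [show Submodule.span _ (s : Set V) = P ⊔ N from hPN,
    sup_inf_halfSpace_eq_sup_map₂_eliminant hfP hfN]
  exact hP.sup (hP.map₂ _ hN)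

theorem pointedCone_fg_inf_of_dualFG {p : W →ₗ[K] V →ₗ[K] K} {C D : PointedCone K V} (hC : C.FG)
    (hD : D.DualFG p) : (C ⊓ D).FG := by
  classical
  obtain ⟨s, rfl⟩ := hD
  induction s using Finset.induction_on with
  | empty => simpa using hC
  | insert w s _ ih =>
    rw [Finset.coe_insert, PointedCone.dual_insert, PointedCone.dual_singleton,
      inf_left_comm, inf_comm]
    exact pointedCone_fg_inf_halfSpace ih (p w)

theorem exists_finset_dual_inf_eq_bot (S : Submodule K V) [FiniteDimensional K S] :
    ∃ t : Finset (Module.Dual K V), dual .id t ⊓ (S : PointedCone K V) = ⊥ := by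
  classical
  let b := Module.finBasis K S
  choose e he using fun i ↦ (b.coord i).exists_extend
  refine ⟨Finset.univ.image e ∪ Finset.univ.image (-e), eq_bot_iff.2 fun x ⟨hxt, hxS⟩ ↦ ?_⟩
  have hcoord : ∀ i, b.coord i ⟨x, hxS⟩ = 0 := fun i ↦ by
    have hpos : 0 ≤ e i x := hxt (by simp)
    have hneg : 0 ≤ (-e) i x := hxt (by simp)
    rw [← he i]
    exact le_antisymm (by simpa using hneg) hpos
  exact congrArg Subtype.val (b.forall_coord_eq_zero_iff.1 hcoord)

theorem pointedCone_fg_inf_ofSubmodule {C : PointedCone K V} (hC : C.FG) (U : Submodule K V) :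
    (C ⊓ (U : PointedCone K V)).FG := by
  obtain ⟨s, rfl⟩ := hC
  let S : Submodule K (V ⧸ U) := (Submodule.span K s).map U.mkQ
  obtain ⟨t, ht⟩ := exists_finset_dual_inf_eq_bot S
  have hU : hull K s ⊓ (U : PointedCone K V) = hull K s ⊓ dual U.mkQ.dualMap t := by
    ext x
    refine and_congr_right fun hxs ↦ ⟨fun (hxU : x ∈ U) f _ ↦ ?_, fun hxt ↦ ?_⟩
    · simp [(Submodule.Quotient.mk_eq_zero U).2 hxU]
    · have hxS : U.mkQ x ∈ S := Submodule.mem_map_of_mem (PointedCone.hull_le_span _ _ hxs)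
      have hx0 : U.mkQ x ∈ (⊥ : PointedCone K (V ⧸ U)) := ht ▸ ⟨fun f hf ↦ hxt hf, hxS⟩
      exact (Submodule.Quotient.mk_eq_zero U).1 hx0
  exact hU ▸ pointedCone_fg_inf_of_dualFG (Submodule.fg_span s.finite_toSet) (.dual_of_finset _ t)

theorem pointedCone_fg_inf {C D : PointedCone K V} (hC : C.FG) (hD : D.FG) : (C ⊓ D).FG := by
  let diagonal : Submodule K (V × V) := LinearMap.eqLocus (.fst K V V) (.snd K V V)
  have hCD : C ⊓ D = PointedCone.map (.fst K V V) (C.prod D ⊓ diagonal) := by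
    ext x
    constructor
    · rintro ⟨hxC, hxD⟩
      exact ⟨(x, x), ⟨⟨hxC, hxD⟩, rfl⟩, rfl⟩
    · rintro ⟨⟨y, z⟩, ⟨⟨hy, hz⟩, rfl : y = z⟩, rfl⟩
      exact ⟨hy, hz⟩
  exact hCD ▸ (pointedCone_fg_inf_ofSubmodule (hC.prod hD) diagonal).map _

theorem exists_dual_nonneg_of_notMem_hull_image {ι : Type*} (s : Finset ι) (u : ι → V) {x : V}
    (hx : x ∉ hull K (u '' s)) :
    ∃ f : Module.Dual K V, (∀ i ∈ s, 0 ≤ f (u i)) ∧ f x < 0 := by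
  classical
  induction s using Finset.induction_on generalizing u x with
  | empty =>
    obtain ⟨f, hf⟩ := Module.Projective.exists_dual_eq_one K (x := x) (by simpa using hx)
    exact ⟨-f, by simp, by simp [hf]⟩
  | insert a s _ ih =>
    rw [Finset.coe_insert, Set.image_insert_eq] at hx
    set C := hull K (insert (u a) (u '' s))
    have hsC : hull K (u '' s) ≤ C := Submodule.span_mono (Set.subset_insert _ _)
    have haC : u a ∈ C := Submodule.subset_span (Set.mem_insert _ _)
    obtain ⟨f, hfs, hfx⟩ := ih u fun h ↦ hx (hsC h)
    obtain hfa | hfa := le_or_gt 0 (f (u a))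
    · exact ⟨f, by simpa [hfa] using hfs, hfx⟩
    -- Project everything to `ker f` along `u a`: by the signs of `f`, the generators stay in `C`
    -- and the point stays outside, while functionals on `ker f` extend by `0` to `u a`.
    let π : V →ₗ[K] V := LinearMap.id - f.smulRight ((f (u a))⁻¹ • u a)
    have hπ : ∀ z, π z = z - (f z / f (u a)) • u a := fun z ↦ by
      simp [π, smul_smul, div_eq_mul_inv]
    have hπs : hull K ((π ∘ u) '' s) ≤ C := by
      refine Submodule.span_le.2 ?_
      rintro _ ⟨i, hi, rfl⟩
      have hui : u i ∈ C := hsC (Submodule.subset_span ⟨i, hi, rfl⟩)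
      rw [Function.comp_apply, hπ, sub_eq_add_neg, ← neg_smul]
      exact add_mem hui
        (C.smul_mem (neg_nonneg.2 (div_nonpos_of_nonneg_of_nonpos (hfs i hi) hfa.le)) haC)
    have hπx : π x ∉ hull K ((π ∘ u) '' s) := fun h ↦ hx <| by
      rw [← sub_add_cancel x ((f x / f (u a)) • u a), ← hπ]
      exact add_mem (hπs h) (C.smul_mem (div_nonneg_of_nonpos hfx.le hfa.le) haC)
    obtain ⟨g, hgs, hgx⟩ := ih (π ∘ u) hπx
    have hπa : π (u a) = 0 := by simp [hπ, hfa.ne]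
    exact ⟨g ∘ₗ π, by simpa [hπa] using hgs, hgx⟩

theorem exists_mem_dual_neg_of_notMem {C : PointedCone K V} (hC : C.FG) {x : V} (hx : x ∉ C) :
    ∃ f ∈ dual (Module.Dual.eval K V) (C : Set V), f x < 0 := by
  obtain ⟨s, rfl⟩ := hC
  obtain ⟨f, hfs, hfx⟩ := exists_dual_nonneg_of_notMem_hull_image s id (by simpa using hx)
  exact ⟨f, (PointedCone.dual_hull (R := K) (s : Set V)).ge hfs, hfx⟩

theorem exists_dual_le_and_nonneg {C D : PointedCone K V} (hC : C.FG) (hD : D.FG)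
    {ℓ : Module.Dual K V} (hℓ : ∀ x ∈ C ⊓ D, 0 ≤ ℓ x) :
    ∃ g : Module.Dual K V, (∀ x ∈ C, g x ≤ ℓ x) ∧ ∀ y ∈ D, 0 ≤ g y := by
  let E : PointedCone K (V × K) :=
    C.map ((-LinearMap.id).prod ℓ) ⊔ D.map (LinearMap.inl K V K)
  have hE : E.FG := (hC.map _).sup (hD.map _)
  have hnotMem : ((0, -1) : V × K) ∉ E := fun h ↦ by
    obtain ⟨_, ⟨x, hx, rfl⟩, _, ⟨y, hy, rfl⟩, hxy⟩ := Submodule.mem_sup.1 h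
    obtain ⟨hyx, hℓx⟩ : -x + y = 0 ∧ ℓ x = -1 := by simpa using hxy
    obtain rfl : x = y := neg_add_eq_zero.1 hyx
    have : 0 ≤ ℓ x := hℓ x ⟨hx, hy⟩
    linarith
  obtain ⟨F, hFE, hF⟩ := exists_mem_dual_neg_of_notMem hE hnotMem
  let a : K := F (0, 1)
  have hFa : ∀ v c, F (v, c) = F (v, 0) + c * a := fun v c ↦ by
    rw [← smul_eq_mul, ← map_smul, ← map_add]
    simp
  have ha : 0 < a := by
    rw [hFa, Prod.mk_zero_zero, map_zero] at hF
    linarith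
  refine ⟨a⁻¹ • F ∘ₗ LinearMap.inl K V K, fun x hx ↦ (inv_mul_le_iff₀ ha).2 ?_, fun y hy ↦
    mul_nonneg (inv_nonneg.2 ha.le) (hFE (Submodule.mem_sup_right ⟨y, hy, rfl⟩))⟩
  have hFx : 0 ≤ F (-x, ℓ x) := hFE (Submodule.mem_sup_left ⟨x, hx, rfl⟩)
  have hFneg : F (-x, 0) = -F (x, 0) := by rw [← map_neg, Prod.neg_mk, neg_zero]
  rw [hFa, hFneg] at hFx
  change F (x, 0) ≤ a * ℓ x
  linarith

theorem pointedCone_dual_inf {C D : PointedCone K V} (hC : C.FG) (hD : D.FG) :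
    dual (Module.Dual.eval K V) ((C ⊓ D : PointedCone K V) : Set V) =
      dual (Module.Dual.eval K V) (C : Set V) ⊔ dual (Module.Dual.eval K V) (D : Set V) := by
  refine le_antisymm (fun ℓ hℓ ↦ ?_)
    (sup_le (PointedCone.dual_anti inf_le_left) (PointedCone.dual_anti inf_le_right))
  obtain ⟨g, hgC, hgD⟩ := exists_dual_le_and_nonneg hC hD hℓ
  exact Submodule.mem_sup.2
    ⟨ℓ - g, fun x hx ↦ sub_nonneg.2 (hgC x hx), g, hgD, sub_add_cancel ℓ g⟩

end OrderedField

section Real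

variable {V : Type*} [AddCommGroup V] [Module ℝ V] {σ σ' τ : Set V}

theorem coe_hull_finset (s : Finset V) :
    (hull ℝ (s : Set V) : Set V) =
      {x | ∃ c : V → ℝ, (∀ v ∈ s, 0 ≤ c v) ∧ x = ∑ v ∈ s, c v • v} := by
  ext x
  constructor
  · intro hx
    obtain ⟨c, -, rfl⟩ := Submodule.mem_span_finset.1 hx
    exact ⟨fun v ↦ c v, fun v _ ↦ (c v).2, rfl⟩
  · rintro ⟨c, hc, rfl⟩
    exact sum_mem fun v hv ↦ PointedCone.smul_mem _ (hc v hv) (Submodule.subset_span hv)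

theorem isPolyhedralCone_iff_exists_fg :
    IsPolyhedralCone σ ↔ ∃ C : PointedCone ℝ V, C.FG ∧ (C : Set V) = σ := by
  constructor
  · rintro ⟨s, rfl⟩
    exact ⟨hull ℝ s, Submodule.fg_span s.finite_toSet, coe_hull_finset s⟩
  · rintro ⟨_, ⟨s, rfl⟩, rfl⟩
    exact ⟨s, coe_hull_finset s⟩

theorem IsPolyhedralCone.inter (hσ : IsPolyhedralCone σ) (hσ' : IsPolyhedralCone σ') :
    IsPolyhedralCone (σ ∩ σ') := by
  obtain ⟨C, hC, rfl⟩ := isPolyhedralCone_iff_exists_fg.1 hσ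
  obtain ⟨D, hD, rfl⟩ := isPolyhedralCone_iff_exists_fg.1 hσ'
  exact isPolyhedralCone_iff_exists_fg.2 ⟨C ⊓ D, pointedCone_fg_inf hC hD, rfl⟩

theorem setOf_add_apply_eq_zero_eq_inter {m m' : Module.Dual ℝ V} (hm : ∀ x ∈ σ, 0 ≤ m x)
    (hm' : ∀ x ∈ σ', 0 ≤ m' x) :
    {x ∈ σ ∩ σ' | (m + m') x = 0} = {x ∈ σ | m x = 0} ∩ {x ∈ σ' | m' x = 0} := by
  ext x
  constructor
  · rintro ⟨⟨hx, hx'⟩, hsum⟩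
    obtain ⟨h, h'⟩ := (add_eq_zero_iff_of_nonneg (hm x hx) (hm' x hx')).1 hsum
    exact ⟨⟨hx, h⟩, hx', h'⟩
  · rintro ⟨⟨hx, h⟩, hx', h'⟩
    exact ⟨⟨hx, hx'⟩, by simp [h, h']⟩

theorem IsFaceOf.exists_eq_inter (hσ : IsPolyhedralCone σ) (hσ' : IsPolyhedralCone σ')
    (hτ : IsFaceOf τ (σ ∩ σ')) :
    ∃ τ₁ τ₂ : Set V, IsFaceOf τ₁ σ ∧ IsFaceOf τ₂ σ' ∧ τ = τ₁ ∩ τ₂ := by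
  obtain ⟨C, hC, rfl⟩ := isPolyhedralCone_iff_exists_fg.1 hσ
  obtain ⟨D, hD, rfl⟩ := isPolyhedralCone_iff_exists_fg.1 hσ'
  obtain ⟨ℓ, hℓ, rfl⟩ := hτ
  obtain ⟨m, hm, m', hm', rfl⟩ := Submodule.mem_sup.1 ((pointedCone_dual_inf hC hD).le hℓ)
  exact ⟨_, _, ⟨m, hm, rfl⟩, ⟨m', hm', rfl⟩, setOf_add_apply_eq_zero_eq_inter hm hm'⟩

end Real

theorem stmt13_general {V : Type*} [AddCommGroup V] [Module ℝ V]
    {σ σ' : Set V} (hσ : IsPolyhedralCone σ) (hσ' : IsPolyhedralCone σ') :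
    IsPolyhedralCone (σ ∩ σ') ∧
      ∀ τ : Set V, IsFaceOf τ (σ ∩ σ') →
        ∃ τ₁ τ₂ : Set V, IsFaceOf τ₁ σ ∧ IsFaceOf τ₂ σ' ∧ τ = τ₁ ∩ τ₂ :=
  ⟨hσ.inter hσ', fun _ hτ ↦ hτ.exists_eq_inter hσ hσ'⟩

/-- The intersection of two polyhedral cones in a finite-dimensional real vector space
is a polyhedral cone, and every face of the intersection is the intersection of a face
of the first cone with a face of the second. -/
theorem stmt13 {V : Type*} [AddCommGroup V] [Module ℝ V] [FiniteDimensional ℝ V]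
    {σ σ' : Set V} (hσ : IsPolyhedralCone σ) (hσ' : IsPolyhedralCone σ') :
    IsPolyhedralCone (σ ∩ σ') ∧
      ∀ τ : Set V, IsFaceOf τ (σ ∩ σ') →
        ∃ τ₁ τ₂ : Set V, IsFaceOf τ₁ σ ∧ IsFaceOf τ₂ σ' ∧ τ = τ₁ ∩ τ₂ :=
  stmt13_general hσ hσ'
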